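/- arXiv:1206.4284 — 2 statements merged into one kernel-verified Lean document; each statement's English description precedes it below -/
import Mathlib

section
/- Let C₀ and C₁ be categories, with C₁ a groupoid, let C₂ be a category, and let s₁, t₁ : C₁ ⥤ C₀ and s₂, t₂ : C₂ ⥤ C₁ be functors satisfying s₁ ∘ t₂ = s₁ ∘ s₂ and t₁ ∘ t₂ = t₁ ∘ s₂. Let P = C₁ ×_{C₀×C₀} C₁ be the strict pullback category whose objects are pairs (X, Y) of objects of C₁ with s₁(X) = s₁(Y) and t₁(X) = t₁(Y) and whose morphisms are pairs (u, v) of morphisms of C₁ with s₁(u) = s₁(v) and t₁(u) = t₁(v); P is a groupoid. Suppose the induced functor s₂ × t₂ : C₂ ⥤ P is a fibration. Then for all objects a, b of C₀: (1) C₁(a,b) is a groupoid; and (2) the induced functor C₂(a,b) ⥤ C₁(a,b) × C₁(a,b), sending x to (s₂(x), t₂(x)) and φ to (s₂(φ), t₂(φ)), is a fibration. (This is the fibrancy claim in the proof of Proposition 3.1.) -/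
open CategoryTheory

universe v₀ v₁ v₂ u₀ u₁ u₂

def IsFibration {A : Type u₀} {B : Type u₁} [Category.{v₀} A] [Category.{v₁} B]
    (F : A ⥤ B) : Prop :=
  ∀ ⦃b b' : B⦄ (f : b ⟶ b') (a' : A) (h : F.obj a' = b'),
    ∃ (a : A) (ha : F.obj a = b) (e : a ≅ a'),
      F.map e.hom = eqToHom ha ≫ f ≫ eqToHom h.symm

variable {C₀ : Type u₀} {C₁ : Type u₁} {C₂ : Type u₂}
  [Category.{v₀} C₀] [Category.{v₁} C₁] [Category.{v₂} C₂]

/-- Objects of the strict pullback `C₁ ×_{C₀×C₀} C₁`. -/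
structure PB (s₁ t₁ : C₁ ⥤ C₀) where
  X : C₁
  Y : C₁
  hs : s₁.obj X = s₁.obj Y
  ht : t₁.obj X = t₁.obj Y

/-- Morphisms of the strict pullback `C₁ ×_{C₀×C₀} C₁`. -/
@[ext]
structure PBHom {s₁ t₁ : C₁ ⥤ C₀} (A B : PB s₁ t₁) where
  u : A.X ⟶ B.X
  v : A.Y ⟶ B.Y
  hs : s₁.map u ≫ eqToHom B.hs = eqToHom A.hs ≫ s₁.map v
  ht : t₁.map u ≫ eqToHom B.ht = eqToHom A.ht ≫ t₁.map v

instance (s₁ t₁ : C₁ ⥤ C₀) : Category (PB s₁ t₁) where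
  Hom := PBHom
  id A := ⟨𝟙 A.X, 𝟙 A.Y, by simp, by simp⟩
  comp f g := ⟨f.u ≫ g.u, f.v ≫ g.v,
    by rw [Functor.map_comp, Functor.map_comp, Category.assoc, g.hs, ← Category.assoc, f.hs,
      Category.assoc],
    by rw [Functor.map_comp, Functor.map_comp, Category.assoc, g.ht, ← Category.assoc, f.ht,
      Category.assoc]⟩
  id_comp f := by apply PBHom.ext <;> simp
  comp_id f := by apply PBHom.ext <;> simp
  assoc f g h := by apply PBHom.ext <;> simp

@[simp] theorem PB.id_u {s₁ t₁ : C₁ ⥤ C₀} (A : PB s₁ t₁) :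
    PBHom.u (𝟙 A) = 𝟙 A.X := rfl
@[simp] theorem PB.id_v {s₁ t₁ : C₁ ⥤ C₀} (A : PB s₁ t₁) :
    PBHom.v (𝟙 A) = 𝟙 A.Y := rfl
@[simp] theorem PB.comp_u {s₁ t₁ : C₁ ⥤ C₀} {A B C : PB s₁ t₁} (f : A ⟶ B) (g : B ⟶ C) :
    PBHom.u (f ≫ g) = PBHom.u f ≫ PBHom.u g := rfl
@[simp] theorem PB.comp_v {s₁ t₁ : C₁ ⥤ C₀} {A B C : PB s₁ t₁} (f : A ⟶ B) (g : B ⟶ C) :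
    PBHom.v (f ≫ g) = PBHom.v f ≫ PBHom.v g := rfl

/-- The functor `s₂ × t₂ : C₂ ⥤ C₁ ×_{C₀×C₀} C₁`. -/
def sourceTarget (s₁ t₁ : C₁ ⥤ C₀) (s₂ t₂ : C₂ ⥤ C₁)
    (hst : t₂ ⋙ s₁ = s₂ ⋙ s₁) (htt : t₂ ⋙ t₁ = s₂ ⋙ t₁) :
    C₂ ⥤ PB s₁ t₁ where
  obj x := ⟨s₂.obj x, t₂.obj x, (Functor.congr_obj hst x).symm, (Functor.congr_obj htt x).symm⟩
  map {x y} φ := by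
    refine ⟨s₂.map φ, t₂.map φ, ?_, ?_⟩
    · have h := Functor.congr_hom hst φ
      simp only [Functor.comp_map] at h
      rw [h]
      simp
    · have h := Functor.congr_hom htt φ
      simp only [Functor.comp_map] at h
      rw [h]
      simp
  map_id x := by apply PBHom.ext <;> simp
  map_comp f g := by apply PBHom.ext <;> simp

/-- Objects of the category `C₁(a,b)`: objects `X` of `C₁` with `s₁(X) = a` and `t₁(X) = b`. -/
structure Hom1 (s₁ t₁ : C₁ ⥤ C₀) (a b : C₀) where
  X : C₁
  hs : s₁.obj X = a
  ht : t₁.obj X = b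

/-- Morphisms of `C₁(a,b)`: morphisms `u` of `C₁` with `s₁(u) = 𝟙_a` and `t₁(u) = 𝟙_b`. -/
@[ext]
structure Hom1Hom {s₁ t₁ : C₁ ⥤ C₀} {a b : C₀} (A B : Hom1 s₁ t₁ a b) where
  u : A.X ⟶ B.X
  hs : s₁.map u = eqToHom (A.hs.trans B.hs.symm)
  ht : t₁.map u = eqToHom (A.ht.trans B.ht.symm)

instance (s₁ t₁ : C₁ ⥤ C₀) (a b : C₀) : Category (Hom1 s₁ t₁ a b) where
  Hom := Hom1Hom
  id A := ⟨𝟙 A.X, by simp, by simp⟩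
  comp f g := ⟨f.u ≫ g.u, by rw [Functor.map_comp, f.hs, g.hs, eqToHom_trans],
    by rw [Functor.map_comp, f.ht, g.ht, eqToHom_trans]⟩
  id_comp f := by apply Hom1Hom.ext; simp
  comp_id f := by apply Hom1Hom.ext; simp
  assoc f g h := by apply Hom1Hom.ext; simp

@[simp] theorem Hom1.id_u {s₁ t₁ : C₁ ⥤ C₀} {a b : C₀} (A : Hom1 s₁ t₁ a b) :
    Hom1Hom.u (𝟙 A) = 𝟙 A.X := rfl
@[simp] theorem Hom1.comp_u {s₁ t₁ : C₁ ⥤ C₀} {a b : C₀} {A B C : Hom1 s₁ t₁ a b}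
    (f : A ⟶ B) (g : B ⟶ C) : Hom1Hom.u (f ≫ g) = Hom1Hom.u f ≫ Hom1Hom.u g := rfl

/-- Objects of the category `C₂(a,b)`: objects `x` of `C₂` with `s₁(s₂(x)) = a` and
`t₁(t₂(x)) = b`. -/
structure Hom2 (s₁ t₁ : C₁ ⥤ C₀) (s₂ t₂ : C₂ ⥤ C₁) (a b : C₀) where
  x : C₂
  hs : s₁.obj (s₂.obj x) = a
  ht : t₁.obj (t₂.obj x) = b

/-- Morphisms of `C₂(a,b)`: morphisms `φ` of `C₂` with `s₁(s₂(φ)) = 𝟙_a` and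
`t₁(t₂(φ)) = 𝟙_b`. -/
@[ext]
structure Hom2Hom {s₁ t₁ : C₁ ⥤ C₀} {s₂ t₂ : C₂ ⥤ C₁} {a b : C₀}
    (A B : Hom2 s₁ t₁ s₂ t₂ a b) where
  φ : A.x ⟶ B.x
  hs : s₁.map (s₂.map φ) = eqToHom (A.hs.trans B.hs.symm)
  ht : t₁.map (t₂.map φ) = eqToHom (A.ht.trans B.ht.symm)

instance (s₁ t₁ : C₁ ⥤ C₀) (s₂ t₂ : C₂ ⥤ C₁) (a b : C₀) :
    Category (Hom2 s₁ t₁ s₂ t₂ a b) where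
  Hom := Hom2Hom
  id A := ⟨𝟙 A.x, by simp, by simp⟩
  comp f g := ⟨f.φ ≫ g.φ,
    by rw [Functor.map_comp, Functor.map_comp, f.hs, g.hs, eqToHom_trans],
    by rw [Functor.map_comp, Functor.map_comp, f.ht, g.ht, eqToHom_trans]⟩
  id_comp f := by apply Hom2Hom.ext; simp
  comp_id f := by apply Hom2Hom.ext; simp
  assoc f g h := by apply Hom2Hom.ext; simp

@[simp] theorem Hom2.id_φ {s₁ t₁ : C₁ ⥤ C₀} {s₂ t₂ : C₂ ⥤ C₁} {a b : C₀}
    (A : Hom2 s₁ t₁ s₂ t₂ a b) : Hom2Hom.φ (𝟙 A) = 𝟙 A.x := rfl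
@[simp] theorem Hom2.comp_φ {s₁ t₁ : C₁ ⥤ C₀} {s₂ t₂ : C₂ ⥤ C₁} {a b : C₀}
    {A B C : Hom2 s₁ t₁ s₂ t₂ a b} (f : A ⟶ B) (g : B ⟶ C) :
    Hom2Hom.φ (f ≫ g) = Hom2Hom.φ f ≫ Hom2Hom.φ g := rfl

/-- The induced functor `C₂(a,b) ⥤ C₁(a,b) × C₁(a,b)`, sending `x` to `(s₂(x), t₂(x))`
and `φ` to `(s₂(φ), t₂(φ))`. -/
def homFunctor (s₁ t₁ : C₁ ⥤ C₀) (s₂ t₂ : C₂ ⥤ C₁)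
    (hst : t₂ ⋙ s₁ = s₂ ⋙ s₁) (htt : t₂ ⋙ t₁ = s₂ ⋙ t₁) (a b : C₀) :
    Hom2 s₁ t₁ s₂ t₂ a b ⥤ Hom1 s₁ t₁ a b × Hom1 s₁ t₁ a b where
  obj A := ⟨⟨s₂.obj A.x, A.hs, (Functor.congr_obj htt A.x).symm.trans A.ht⟩,
            ⟨t₂.obj A.x, (Functor.congr_obj hst A.x).trans A.hs, A.ht⟩⟩
  map {A B} f := by
    refine ⟨⟨s₂.map f.φ, f.hs, ?_⟩, ⟨t₂.map f.φ, ?_, f.ht⟩⟩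
    · have h := Functor.congr_hom htt.symm f.φ
      simp only [Functor.comp_map] at h
      rw [h, f.ht]
      simp
    · have h := Functor.congr_hom hst f.φ
      simp only [Functor.comp_map] at h
      rw [h, f.hs]
      simp
  map_id A := by
    refine Prod.ext ?_ ?_ <;> apply Hom1Hom.ext <;> simp
  map_comp f g := by
    refine Prod.ext ?_ ?_ <;> apply Hom1Hom.ext <;> simp

/-!
`C₂(a,b)` is the strict pullback of `s₂ × t₂ : C₂ ⥤ C₁ ×_{C₀×C₀} C₁` along the evident functor
`C₁(a,b) × C₁(a,b) ⥤ C₁ ×_{C₀×C₀} C₁`, and fibrations are stable under strict pullback. Concretely,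
a morphism of `C₁(a,b) × C₁(a,b)` lifts to an isomorphism of `C₂` lying over `𝟙_a` and `𝟙_b`. The
inverse of an isomorphism over identities is again over identities, so the lift is an isomorphism
of `C₂(a,b)`; the same remark makes `C₁(a,b)` a groupoid.
-/

theorem map_inv_eq_eqToHom {A B : Type*} [Category* A] [Category* B] (F : A ⥤ B) {x y : A}
    (e : x ≅ y) {h : F.obj x = F.obj y} (he : F.map e.hom = eqToHom h) :
    F.map e.inv = eqToHom h.symm := by
  have hiso : F.mapIso e = eqToIso h := Iso.ext he
  exact congrArg Iso.inv hiso

theorem IsFibration.of_exists_iso {A B : Type*} [Category* A] [Category* B] {F : A ⥤ B}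
    (hF : ∀ ⦃b : B⦄ (a' : A) (f : b ⟶ F.obj a'),
      ∃ (a : A) (ha : F.obj a = b) (e : a ≅ a'), F.map e.hom = eqToHom ha ≫ f) :
    IsFibration F := by
  rintro b _ f a' rfl
  simpa using hF a' f

namespace PB

variable {s₁ t₁ : C₁ ⥤ C₀} {A B : PB s₁ t₁}

theorem eqToHom_u (h : A = B) : PBHom.u (eqToHom h) = eqToHom (congrArg PB.X h) := by
  subst h
  rfl

theorem eqToHom_v (h : A = B) : PBHom.v (eqToHom h) = eqToHom (congrArg PB.Y h) := by
  subst h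
  rfl

end PB

namespace Hom1

variable {s₁ t₁ : C₁ ⥤ C₀} {a b : C₀}

theorem isIso_of_isIso_u {A B : Hom1 s₁ t₁ a b} (f : A ⟶ B) [IsIso f.u] : IsIso f :=
  ⟨⟨inv f.u, map_inv_eq_eqToHom s₁ (asIso f.u) f.hs, map_inv_eq_eqToHom t₁ (asIso f.u) f.ht⟩,
    Hom1Hom.ext (IsIso.hom_inv_id f.u), Hom1Hom.ext (IsIso.inv_hom_id f.u)⟩

/-- The functor `C₁(a,b) × C₁(a,b) ⥤ C₁ ×_{C₀×C₀} C₁` forgetting that the common source and target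
are `a` and `b`. -/
def prodToPB (s₁ t₁ : C₁ ⥤ C₀) (a b : C₀) : Hom1 s₁ t₁ a b × Hom1 s₁ t₁ a b ⥤ PB s₁ t₁ where
  obj A := ⟨A.1.X, A.2.X, A.1.hs.trans A.2.hs.symm, A.1.ht.trans A.2.ht.symm⟩
  map f := ⟨f.1.u, f.2.u, by simp [f.1.hs, f.2.hs], by simp [f.1.ht, f.2.ht]⟩

end Hom1

/-- The isomorphism of `C₂(a,b)` given by an isomorphism `e` of `C₂` with `s₁(s₂(e)) = 𝟙_a` and
`t₁(t₂(e)) = 𝟙_b`. -/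
def Hom2.isoMk {s₁ t₁ : C₁ ⥤ C₀} {s₂ t₂ : C₂ ⥤ C₁} {a b : C₀} {A B : Hom2 s₁ t₁ s₂ t₂ a b}
    (e : A.x ≅ B.x) (hs : s₁.map (s₂.map e.hom) = eqToHom (A.hs.trans B.hs.symm))
    (ht : t₁.map (t₂.map e.hom) = eqToHom (A.ht.trans B.ht.symm)) : A ≅ B where
  hom := ⟨e.hom, hs, ht⟩
  inv := ⟨e.inv, map_inv_eq_eqToHom (s₂ ⋙ s₁) e hs, map_inv_eq_eqToHom (t₂ ⋙ t₁) e ht⟩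
  hom_inv_id := Hom2Hom.ext e.hom_inv_id
  inv_hom_id := Hom2Hom.ext e.inv_hom_id

section Fibration

variable {s₁ t₁ : C₁ ⥤ C₀} {s₂ t₂ : C₂ ⥤ C₁}
  {hst : t₂ ⋙ s₁ = s₂ ⋙ s₁} {htt : t₂ ⋙ t₁ = s₂ ⋙ t₁}

theorem exists_iso_of_isFibration_sourceTarget
    (hfib : IsFibration (sourceTarget s₁ t₁ s₂ t₂ hst htt)) {P : PB s₁ t₁} {y : C₂}
    (f : P ⟶ (sourceTarget s₁ t₁ s₂ t₂ hst htt).obj y) :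
    ∃ (x : C₂) (hX : s₂.obj x = P.X) (hY : t₂.obj x = P.Y) (e : x ≅ y),
      s₂.map e.hom = eqToHom hX ≫ f.u ∧ t₂.map e.hom = eqToHom hY ≫ f.v := by
  obtain ⟨x, hx, e, he⟩ := hfib f y rfl
  rw [eqToHom_refl, Category.comp_id] at he
  have hu : s₂.map e.hom = PBHom.u (eqToHom hx ≫ f) := congrArg PBHom.u he
  have hv : t₂.map e.hom = PBHom.v (eqToHom hx ≫ f) := congrArg PBHom.v he
  rw [PB.comp_u, PB.eqToHom_u] at hu
  rw [PB.comp_v, PB.eqToHom_v] at hv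
  exact ⟨x, congrArg PB.X hx, congrArg PB.Y hx, e, hu, hv⟩

theorem isFibration_homFunctor (hfib : IsFibration (sourceTarget s₁ t₁ s₂ t₂ hst htt))
    (a b : C₀) : IsFibration (homFunctor s₁ t₁ s₂ t₂ hst htt a b) := by
  refine .of_exists_iso fun ⟨⟨X, hXs, hXt⟩, ⟨Y, hYs, hYt⟩⟩ A f ↦ ?_
  obtain ⟨x, hX, hY, e, hu, hv⟩ :=
    exists_iso_of_isFibration_sourceTarget hfib (y := A.x) ((Hom1.prodToPB s₁ t₁ a b).map f)
  obtain rfl : s₂.obj x = X := hX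
  obtain rfl : t₂.obj x = Y := hY
  replace hu : s₂.map e.hom = f.1.u := hu.trans (Category.id_comp _)
  replace hv : t₂.map e.hom = f.2.u := hv.trans (Category.id_comp _)
  have hs : s₁.map (s₂.map e.hom) = eqToHom (hXs.trans A.hs.symm) := hu ▸ f.1.hs
  have ht : t₁.map (t₂.map e.hom) = eqToHom (hYt.trans A.ht.symm) := hv ▸ f.2.ht
  have hmap : (homFunctor s₁ t₁ s₂ t₂ hst htt a b).map
      (Hom2.isoMk (A := ⟨x, hXs, hYt⟩) e hs ht).hom = f :=
    Prod.ext (Hom1Hom.ext hu) (Hom1Hom.ext hv)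
  exact ⟨⟨x, hXs, hYt⟩, rfl, Hom2.isoMk e hs ht, hmap.trans (Category.id_comp f).symm⟩

end Fibration

/-- If `C₁` is a groupoid and the induced functor
`s₂ × t₂ : C₂ ⥤ C₁ ×_{C₀×C₀} C₁` is a fibration, then for all objects `a`, `b` of `C₀`:
(1) `C₁(a,b)` is a groupoid, and (2) the induced functor
`C₂(a,b) ⥤ C₁(a,b) × C₁(a,b)` is a fibration. -/
theorem hom_groupoid_and_hom_fibration {C₀ : Type u₀} {C₁ : Type u₁} {C₂ : Type u₂}
    [Category.{v₀} C₀] [Groupoid.{v₁} C₁] [Category.{v₂} C₂]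
    (s₁ t₁ : C₁ ⥤ C₀) (s₂ t₂ : C₂ ⥤ C₁)
    (hst : t₂ ⋙ s₁ = s₂ ⋙ s₁) (htt : t₂ ⋙ t₁ = s₂ ⋙ t₁)
    (hfib : IsFibration (sourceTarget s₁ t₁ s₂ t₂ hst htt))
    (a b : C₀) :
    (∀ (X Y : Hom1 s₁ t₁ a b) (f : X ⟶ Y), IsIso f) ∧
      IsFibration (homFunctor s₁ t₁ s₂ t₂ hst htt a b) := by
  exact ⟨fun _ _ f ↦ Hom1.isIso_of_isIso_u f, isFibration_homFunctor hfib a b⟩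
end

section
/- Let C₀ be a groupoid, C₁ a category, and s, t : C₁ ⥤ C₀ functors such that s × t : C₁ ⥤ C₀ × C₀ is a fibration. Let C₁ ×_{C₀} C₁ denote the strict pullback category (objects: pairs (M, N) of objects of C₁ with t(M) = s(N); morphisms: pairs (u, v) with t(u) = s(v)), and let m : C₁ ×_{C₀} C₁ ⥤ C₁ be a functor with s ∘ m = s ∘ pr₁ and t ∘ m = t ∘ pr₂. Let C₁ ×ʰ_{C₀} C₁ denote the homotopy pullback category, whose objects are triples (M, N, φ) with M, N objects of C₁ and φ : t(M) ≅ s(N) an isomorphism in C₀, and whose morphisms (M, N, φ) ⟶ (M', N', φ') are pairs (u : M ⟶ M', v : N ⟶ N') with φ' ∘ t(u) = s(v) ∘ φ. Then there exists a functor m̃ : C₁ ×ʰ_{C₀} C₁ ⥤ C₁ satisfying s ∘ m̃ = s ∘ pr₁ and t ∘ m̃ = t ∘ pr₂, together with a natural isomorphism m̃ ∘ ι ≅ m, where ι : C₁ ×_{C₀} C₁ ⥤ C₁ ×ʰ_{C₀} C₁ is the inclusion (M, N) ↦ (M, N, 𝟙). (This is the claim of Section 2.1 that the fibration condition allows one to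 extend horizontal composition from the strict pullback to the homotopy pullback.) -/
open CategoryTheory

universe v₀ v₁ u₀ u₁

variable {C₀ : Type u₀} {C₁ : Type u₁} [Category.{v₀} C₀] [Category.{v₁} C₁]

/-- The strict pullback `C₁ ×_{C₀} C₁`: objects are pairs `(M, N)` of objects of `C₁`
with `t(M) = s(N)`. -/
structure StrictPB (s t : C₁ ⥤ C₀) where
  M : C₁
  N : C₁
  w : t.obj M = s.obj N

/-- Morphisms of the strict pullback: pairs `(u, v)` with `t(u) = s(v)`. -/
@[ext]
structure StrictPBHom {s t : C₁ ⥤ C₀} (A B : StrictPB s t) where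
  u : A.M ⟶ B.M
  v : A.N ⟶ B.N
  w : t.map u ≫ eqToHom B.w = eqToHom A.w ≫ s.map v

instance (s t : C₁ ⥤ C₀) : Category (StrictPB s t) where
  Hom := StrictPBHom
  id A := ⟨𝟙 A.M, 𝟙 A.N, by simp⟩
  comp f g := ⟨f.u ≫ g.u, f.v ≫ g.v, by
    rw [Functor.map_comp, Functor.map_comp, Category.assoc, g.w, ← Category.assoc, f.w,
      Category.assoc]⟩
  id_comp f := by apply StrictPBHom.ext <;> simp
  comp_id f := by apply StrictPBHom.ext <;> simp
  assoc f g h := by apply StrictPBHom.ext <;> simp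

/-- First projection of the strict pullback. -/
def pbFst (s t : C₁ ⥤ C₀) : StrictPB s t ⥤ C₁ where
  obj A := A.M
  map f := f.u

/-- Second projection of the strict pullback. -/
def pbSnd (s t : C₁ ⥤ C₀) : StrictPB s t ⥤ C₁ where
  obj A := A.N
  map f := f.v

/-- The homotopy pullback `C₁ ×ʰ_{C₀} C₁`: objects are triples `(M, N, φ)` with
`φ : t(M) ≅ s(N)` an isomorphism in `C₀`. -/
structure HtpyPB (s t : C₁ ⥤ C₀) where
  M : C₁
  N : C₁
  φ : t.obj M ≅ s.obj N

/-- Morphisms of the homotopy pullback: pairs `(u, v)` with `φ' ∘ t(u) = s(v) ∘ φ`. -/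
@[ext]
structure HtpyPBHom {s t : C₁ ⥤ C₀} (A B : HtpyPB s t) where
  u : A.M ⟶ B.M
  v : A.N ⟶ B.N
  w : t.map u ≫ B.φ.hom = A.φ.hom ≫ s.map v

instance (s t : C₁ ⥤ C₀) : Category (HtpyPB s t) where
  Hom := HtpyPBHom
  id A := ⟨𝟙 A.M, 𝟙 A.N, by simp⟩
  comp f g := ⟨f.u ≫ g.u, f.v ≫ g.v, by
    rw [Functor.map_comp, Functor.map_comp, Category.assoc, g.w, ← Category.assoc, f.w,
      Category.assoc]⟩
  id_comp f := by apply HtpyPBHom.ext <;> simp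
  comp_id f := by apply HtpyPBHom.ext <;> simp
  assoc f g h := by apply HtpyPBHom.ext <;> simp

/-- First projection of the homotopy pullback. -/
def hpFst (s t : C₁ ⥤ C₀) : HtpyPB s t ⥤ C₁ where
  obj A := A.M
  map f := f.u

/-- Second projection of the homotopy pullback. -/
def hpSnd (s t : C₁ ⥤ C₀) : HtpyPB s t ⥤ C₁ where
  obj A := A.N
  map f := f.v

/-- The inclusion `(M, N) ↦ (M, N, 𝟙)` of the strict pullback in the homotopy pullback. -/
def inclPB (s t : C₁ ⥤ C₀) : StrictPB s t ⥤ HtpyPB s t where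
  obj A := ⟨A.M, A.N, eqToIso A.w⟩
  map f := ⟨f.u, f.v, by simpa using f.w⟩
  map_id A := by apply HtpyPBHom.ext <;> rfl
  map_comp f g := by apply HtpyPBHom.ext <;> rfl

/-!
Since `t` is itself an isofibration, every `(M, N, φ)` is isomorphic to some `(M', N, 𝟙)`, so the
inclusion `ι` of the strict pullback is an equivalence. The functor `ι⁻¹ ⋙ m` then has the
required source and target up to natural isomorphism only; lifting these isomorphisms along the
isofibration `s × t` replaces it by an isomorphic functor for which they become equalities.
-/

section Isofibration

variable {A B C X : Type*} [Category* A] [Category* B] [Category* C] [Category* X]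

/-- A functor is an *isofibration* if isomorphisms lift along it with prescribed codomain. Over a
groupoid these are the fibrations in the sense of `IsFibration`; over a general category only
isomorphisms are required to lift. -/
def IsIsofibration (F : A ⥤ B) : Prop :=
  ∀ ⦃b : B⦄ (a' : A) (f : b ≅ F.obj a'),
    ∃ (a : A) (ha : F.obj a = b) (e : a ≅ a'), F.map e.hom = eqToHom ha ≫ f.hom

theorem IsFibration.isIsofibration {F : A ⥤ B} (hF : IsFibration F) : IsIsofibration F :=
  fun _ a' f ↦ by simpa using hF f.hom a' rfl

theorem IsIsofibration.of_prod'_right {F : A ⥤ B} {G : A ⥤ C}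
    (hFG : IsIsofibration (F.prod' G)) : IsIsofibration G := by
  intro c a' f
  obtain ⟨a, ha, e, he⟩ := hFG a' (Iso.prod (Iso.refl (F.obj a')) f)
  refine ⟨a, congrArg Prod.snd ha, e, ?_⟩
  simpa [eqToHom_map] using congrArg (CategoryTheory.Prod.snd B C).map he

theorem IsIsofibration.exists_iso_comp_eq {F : A ⥤ B} (hF : IsIsofibration F)
    {G : X ⥤ A} {H : X ⥤ B} (α : G ⋙ F ≅ H) :
    ∃ G' : X ⥤ A, Nonempty (G' ≅ G) ∧ G' ⋙ F = H := by
  choose obj hobj e he using fun x ↦ hF (G.obj x) (α.symm.app x)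
  have map_inv (x : X) : F.map (e x).inv = α.hom.app x ≫ eqToHom (hobj x).symm := by
    rw [← cancel_epi (F.map (e x).hom), Iso.map_hom_inv_id, he]
    simp
  refine ⟨G.copyObj obj fun x ↦ (e x).symm, ⟨(G.isoCopyObj obj _).symm⟩,
    CategoryTheory.Functor.ext hobj fun x y f ↦ ?_⟩
  calc F.map ((e x).hom ≫ G.map f ≫ (e y).inv)
    _ = eqToHom (hobj x) ≫ (α.inv.app x ≫ F.map (G.map f) ≫ α.hom.app y) ≫
          eqToHom (hobj y).symm := by simp [he, map_inv]
    _ = eqToHom (hobj x) ≫ H.map f ≫ eqToHom (hobj y).symm := by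
      rw [← Functor.comp_map, NatIso.naturality_1 α f]

end Isofibration

section Inclusion

variable (s t : C₁ ⥤ C₀)

instance inclPB_faithful : (inclPB s t).Faithful where
  map_injective h := StrictPBHom.ext (congrArg HtpyPBHom.u h) (congrArg HtpyPBHom.v h)

instance inclPB_full : (inclPB s t).Full where
  map_surjective f := ⟨⟨f.u, f.v, f.w⟩, rfl⟩

variable {s t}

/-- The isomorphism of the homotopy pullback given by isomorphisms of both components. -/
def HtpyPB.mkIso {A B : HtpyPB s t} (i : A.M ≅ B.M) (j : A.N ≅ B.N)
    (w : t.map i.hom ≫ B.φ.hom = A.φ.hom ≫ s.map j.hom) : A ≅ B where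
  hom := ⟨i.hom, j.hom, w⟩
  inv := ⟨i.inv, j.inv, by
    rw [← cancel_epi (t.map i.hom), Iso.map_hom_inv_id_assoc, ← Category.assoc, w,
      Category.assoc, Iso.map_hom_inv_id, Category.comp_id]⟩
  hom_inv_id := HtpyPBHom.ext i.hom_inv_id j.hom_inv_id
  inv_hom_id := HtpyPBHom.ext i.inv_hom_id j.inv_hom_id

theorem inclPB_essSurj (ht : IsIsofibration t) : (inclPB s t).EssSurj where
  mem_essImage A := by
    obtain ⟨M', hM', e, he⟩ := ht A.M A.φ.symm
    exact ⟨⟨M', A.N, hM'⟩, ⟨HtpyPB.mkIso e (Iso.refl A.N) (by simp [he, inclPB])⟩⟩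

theorem inclPB_isEquivalence (ht : IsIsofibration t) : (inclPB s t).IsEquivalence where
  essSurj := inclPB_essSurj ht

end Inclusion

theorem exists_homotopy_composition_general {s t : C₁ ⥤ C₀} (hst : IsIsofibration (s.prod' t))
    (m : StrictPB s t ⥤ C₁) (σ : m ⋙ s ≅ pbFst s t ⋙ s) (τ : m ⋙ t ≅ pbSnd s t ⋙ t) :
    ∃ m' : HtpyPB s t ⥤ C₁,
      m' ⋙ s = hpFst s t ⋙ s ∧ m' ⋙ t = hpSnd s t ⋙ t ∧
        Nonempty (inclPB s t ⋙ m' ≅ m) := by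
  have : (inclPB s t).IsEquivalence := inclPB_isEquivalence hst.of_prod'_right
  let ι := (inclPB s t).asEquivalence
  let σ' : (ι.inverse ⋙ m) ⋙ s ≅ hpFst s t ⋙ s :=
    Functor.isoWhiskerLeft ι.inverse σ ≪≫ ι.invFunIdAssoc (hpFst s t ⋙ s)
  let τ' : (ι.inverse ⋙ m) ⋙ t ≅ hpSnd s t ⋙ t :=
    Functor.isoWhiskerLeft ι.inverse τ ≪≫ ι.invFunIdAssoc (hpSnd s t ⋙ t)
  obtain ⟨m', ⟨e⟩, hm'⟩ := hst.exists_iso_comp_eq (G := ι.inverse ⋙ m)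
    ((functorProdFunctorEquiv _ _ _).functor.mapIso (Iso.prod σ' τ'))
  exact ⟨m', congrArg (· ⋙ CategoryTheory.Prod.fst C₀ C₀) hm',
    congrArg (· ⋙ CategoryTheory.Prod.snd C₀ C₀) hm',
    ⟨Functor.isoWhiskerLeft (inclPB s t) e ≪≫ ι.funInvIdAssoc m⟩⟩

/-- If `C₀` is a groupoid and `s × t : C₁ ⥤ C₀ × C₀` is a fibration, then any horizontal
composition functor `m` on the strict pullback, compatible with source and target, extends
to a functor `m̃` on the homotopy pullback, compatible with source and target, and
restricting to `m` on the strict pullback up to natural isomorphism. -/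
theorem exists_homotopy_composition {C₀ : Type u₀} {C₁ : Type u₁}
    [Groupoid.{v₀} C₀] [Category.{v₁} C₁] (s t : C₁ ⥤ C₀)
    (hfib : IsFibration (s.prod' t))
    (m : StrictPB s t ⥤ C₁)
    (hsm : m ⋙ s = pbFst s t ⋙ s) (htm : m ⋙ t = pbSnd s t ⋙ t) :
    ∃ m' : HtpyPB s t ⥤ C₁,
      m' ⋙ s = hpFst s t ⋙ s ∧ m' ⋙ t = hpSnd s t ⋙ t ∧
        Nonempty (inclPB s t ⋙ m' ≅ m) :=
  exists_homotopy_composition_general hfib.isIsofibration m (eqToIso hsm) (eqToIso htm)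
end
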